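/- arXiv:1002.2594 — 2 statements merged into one kernel-verified Lean document; each statement's English description precedes it below -/
import Mathlib

section
/- Let p be a prime, let U be a finite field with p^n elements, and let U' be a field extension of U with [U' : U] = p^i for some i ≥ 0. Let α ∈ U' and set β = Tr_{U'/U}(α). If β ≠ 0, then the subfield F_p(β) of U' generated by β over the prime field F_p is contained in F_p(α), and p^i divides the degree [F_p(α) : F_p(β)]. -/
open IntermediateField

set_option synthInstance.maxHeartbeats 1000000

/-!
Work over any field `F ⊆ U` with `F(α)/F` normal, such as `F_p`. Since `[U' : U]` is a power of the
characteristic and `Tr_{U'/U}(α) = [U' : U(α)] • Tr_{U(α)/U}(α)`, a nonzero trace forces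
`U' = U(α)`. By normality the conjugates of `α` over `U`, hence the coefficients of its minimal
polynomial over `U`, lie in `F(α)`. So the trace lies in `F(α)`, and that polynomial is also the
minimal polynomial of `α` over `F(α) ∩ U`; comparing degrees,
`[F(α) : F(α) ∩ U] = [U(α) : U] = [U' : U]`.
-/

section NormalIntermediateField

variable {F U L : Type*} [Field F] [Field U] [Field L] [Algebra F U] [Algebra U L] [Algebra F L]
  [IsScalarTower F U L]

theorem algebraMap_coeff_minpoly_mem_of_normal (K : IntermediateField F L) [hK : Normal F K]
    {α : L} (hα : α ∈ K) (k : ℕ) : algebraMap U L ((minpoly U α).coeff k) ∈ K := by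
  have hint : IsIntegral F α := (hK.isIntegral ⟨α, hα⟩).map K.val
  have hsplits : ((minpoly F α).map (algebraMap F K)).Splits := by
    simpa only [K.minpoly_eq] using! hK.splits ⟨α, hα⟩
  have hne : (minpoly F α).map (algebraMap F K) ≠ 0 :=
    Polynomial.map_ne_zero (minpoly.ne_zero hint)
  have hdvd : (minpoly U α).map (algebraMap U L) ∣
      ((minpoly F α).map (algebraMap F K)).map (algebraMap K L) := by
    rw [Polynomial.map_map, ← IsScalarTower.algebraMap_eq, IsScalarTower.algebraMap_eq F U L,
      ← Polynomial.map_map]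
    exact Polynomial.map_dvd _ (minpoly.dvd_map_of_isScalarTower F U α)
  have hlifts : (minpoly U α).map (algebraMap U L) ∈ Polynomial.lifts (algebraMap K L) :=
    ((hsplits.map _).of_dvd (Polynomial.map_ne_zero hne) hdvd).mem_lift_of_roots_mem_range
      ((minpoly.monic hint.tower_top).map _) _ fun _ hroot =>
        hsplits.mem_range_of_isRoot hne ((Polynomial.isRoot_of_mem_roots hroot).dvd hdvd)
  obtain ⟨c, hc⟩ := (Polynomial.lifts_iff_coeff_lifts _).1 hlifts k
  rw [Polynomial.coeff_map] at hc
  exact hc ▸ c.2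

theorem algebraMap_trace_mem_of_normal [FiniteDimensional U L] (K : IntermediateField F L)
    [Normal F K] {α : L} (hα : α ∈ K) : algebraMap U L (Algebra.trace U L α) ∈ K := by
  rw [trace_eq_finrank_mul_minpoly_nextCoeff, map_mul, map_natCast, map_neg,
    Polynomial.nextCoeff_of_natDegree_pos (minpoly.natDegree_pos (.of_finite U α))]
  exact mul_mem (IntermediateField.natCast_mem K _)
    (neg_mem (algebraMap_coeff_minpoly_mem_of_normal K hα _))

theorem finrank_comap_mul_natDegree_minpoly (α : L) [Normal F F⟮α⟯] :
    Module.finrank F (F⟮α⟯.comap (IsScalarTower.toAlgHom F U L)) * (minpoly U α).natDegree =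
      Module.finrank F F⟮α⟯ := by
  set K := F⟮α⟯.comap (IsScalarTower.toAlgHom F U L)
  have hint : IsIntegral F α := (Normal.isIntegral ‹_› (AdjoinSimple.gen F α)).map F⟮α⟯.val
  have hlifts : minpoly U α ∈ Polynomial.lifts (algebraMap K U) :=
    (Polynomial.lifts_iff_coeff_lifts _).2 fun k =>
      ⟨⟨_, algebraMap_coeff_minpoly_mem_of_normal F⟮α⟯ (mem_adjoin_simple_self F α) k⟩, rfl⟩
  have hadjoin : K⟮α⟯.restrictScalars F = F⟮α⟯ := by
    refine SetLike.coe_injective (subset_antisymm ((adjoin_subset_adjoin_iff K).2 ⟨?_, ?_⟩) ?_)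
    · rintro _ ⟨x, rfl⟩
      exact x.2
    · exact Set.singleton_subset_iff.2 (mem_adjoin_simple_self F α)
    · exact adjoin_simple_le_iff.2 (mem_adjoin_simple_self K α)
  calc Module.finrank F K * (minpoly U α).natDegree
      = Module.finrank F K * Module.finrank K K⟮α⟯ := by
        rw [← minpoly.map_algebraMap hint.tower_top hlifts, Polynomial.natDegree_map,
          adjoin.finrank hint.tower_top]
    _ = Module.finrank F (K⟮α⟯.restrictScalars F) := Module.finrank_mul_finrank F K K⟮α⟯
    _ = Module.finrank F F⟮α⟯ := by rw [hadjoin]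

theorem relfinrank_fieldRange_adjoin_simple_of_normal (α : L) [Normal F F⟮α⟯] :
    (IsScalarTower.toAlgHom F U L).fieldRange.relfinrank F⟮α⟯ = (minpoly U α).natDegree := by
  set f := IsScalarTower.toAlgHom F U L
  have : FiniteDimensional F F⟮α⟯ := adjoin.finiteDimensional
    ((Normal.isIntegral ‹_› (AdjoinSimple.gen F α)).map F⟮α⟯.val)
  have hrange : Module.finrank F ↥(f.fieldRange ⊓ F⟮α⟯) = Module.finrank F (F⟮α⟯.comap f) := by
    rw [inf_comm, ← map_comap_eq]
    exact ((F⟮α⟯.comap f).equivMap f).toLinearEquiv.finrank_eq.symm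
  have hpos : 0 < Module.finrank F ↥(f.fieldRange ⊓ F⟮α⟯) :=
    Nat.pos_of_dvd_of_pos (finrank_dvd_of_le_right inf_le_right) Module.finrank_pos
  refine Nat.eq_of_mul_eq_mul_left hpos ?_
  rw [← inf_relfinrank_right, finrank_bot_mul_relfinrank inf_le_right, hrange,
    finrank_comap_mul_natDegree_minpoly]

end NormalIntermediateField

theorem adjoin_simple_eq_top_of_trace_ne_zero {p i : ℕ} [Fact p.Prime] {U L : Type*} [Field U]
    [CharP U p] [Field L] [Algebra U L] (hrank : Module.finrank U L = p ^ i) {α : L}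
    (hα : Algebra.trace U L α ≠ 0) : U⟮α⟯ = ⊤ := by
  have hp : p.Prime := Fact.out
  have : FiniteDimensional U L := .of_finrank_pos (hrank ▸ pow_pos hp.pos i)
  have hndvd : ¬ p ∣ Module.finrank U⟮α⟯ L := by
    rw [trace_eq_finrank_mul_minpoly_nextCoeff] at hα
    exact fun h => left_ne_zero_of_mul hα ((CharP.cast_eq_zero_iff U p _).2 h)
  have hdvd : Module.finrank U⟮α⟯ L ∣ p ^ i :=
    hrank ▸ Dvd.intro_left _ (Module.finrank_mul_finrank U U⟮α⟯ L)
  exact finrank_eq_one_iff_eq_top.1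
    (((hp.coprime_iff_not_dvd.2 hndvd).pow_left i).symm.eq_one_of_dvd hdvd)

theorem pow_dvd_finrank_adjoin_of_trace_ne_zero_general {p i : ℕ} [Fact p.Prime]
    {F U U' : Type*} [Field F] [Field U] [Field U'] [Algebra F U] [Algebra U U'] [Algebra F U']
    [IsScalarTower F U U'] [CharP U p] (hrank : Module.finrank U U' = p ^ i)
    (α : U') [Normal F F⟮α⟯] (hα : Algebra.trace U U' α ≠ 0) :
    F⟮algebraMap U U' (Algebra.trace U U' α)⟯ ≤ F⟮α⟯ ∧
      p ^ i ∣ F⟮algebraMap U U' (Algebra.trace U U' α)⟯.relfinrank F⟮α⟯ := by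
  have : FiniteDimensional U U' := .of_finrank_pos (hrank ▸ pow_pos (Nat.Prime.pos Fact.out) i)
  have hdegree : (minpoly U α).natDegree = p ^ i := by
    rw [← hrank, ← Field.primitive_element_iff_minpoly_natDegree_eq]
    exact adjoin_simple_eq_top_of_trace_ne_zero hrank hα
  refine ⟨adjoin_simple_le_iff.2
    (algebraMap_trace_mem_of_normal F⟮α⟯ (mem_adjoin_simple_self F α)), ?_⟩
  rw [← hdegree, ← relfinrank_fieldRange_adjoin_simple_of_normal (F := F)]
  exact relfinrank_dvd_of_le_left _ (adjoin_simple_le_iff.2 ⟨Algebra.trace U U' α, rfl⟩)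

/-- Let `p` be a prime, `U` a finite field with `p^n` elements, and `U'` a
field extension of `U` with `[U' : U] = p^i`. Let `α ∈ U'` and `β = Tr_{U'/U}(α)`. If `β ≠ 0`
then the subfield `F_p(β)` is contained in `F_p(α)` and `p^i` divides `[F_p(α) : F_p(β)]`. -/
theorem pow_dvd_finrank_adjoin_of_trace_ne_zero
    (p n i : ℕ) [Fact p.Prime]
    (U U' : Type*) [Field U] [Field U'] [Algebra U U'] [Fintype U]
    [Algebra (ZMod p) U']
    (hcard : Fintype.card U = p ^ n)
    (hrank : Module.finrank U U' = p ^ i)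
    (α β : U') (hβdef : β = algebraMap U U' (Algebra.trace U U' α)) (hβ : β ≠ 0) :
    ∃ h : (ZMod p)⟮β⟯ ≤ (ZMod p)⟮α⟯,
      letI : Algebra ↥((ZMod p)⟮β⟯) ↥((ZMod p)⟮α⟯) :=
        (IntermediateField.inclusion h).toRingHom.toAlgebra
      p ^ i ∣ Module.finrank ↥((ZMod p)⟮β⟯) ↥((ZMod p)⟮α⟯) := by
  have : CharP U' p := charP_of_injective_algebraMap (algebraMap (ZMod p) U').injective p
  have : CharP U p := (algebraMap U U').charP (algebraMap U U').injective p
  let _ : Algebra (ZMod p) U := ZMod.algebra U p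
  have : IsScalarTower (ZMod p) U U' := .of_algebraMap_eq' (Subsingleton.elim _ _)
  have : FiniteDimensional U U' := .of_finrank_pos (hrank ▸ pow_pos (Nat.Prime.pos Fact.out) i)
  have : Finite U' := Module.finite_of_finite U
  subst hβdef
  obtain ⟨hle, hdvd⟩ := pow_dvd_finrank_adjoin_of_trace_ne_zero_general (F := ZMod p) hrank α
    (ne_zero_of_map hβ)
  exact ⟨hle, relfinrank_eq_finrank_of_le hle ▸ hdvd⟩
end

section
/- Let p be an odd prime, let U ⊆ U' be finite fields of characteristic p with [U' : U] = p, and let x ∈ U' with x ∉ U be such that x^p − x = γ for some γ ∈ U. Then Tr_{U'/U}(x^{2p−1}) = −γ. -/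
/-!
A primitive element `x` of degree `n` satisfying a trinomial relation `x ^ n = a x + b` multiplies
the basis `1, x, …, x ^ (n - 1)` so sparsely that the diagonal of multiplication by `x ^ k`,
`0 < k < n`, is zero unless `k = n - 1`, in which case it is `0, a, …, a`. Two applications of the
relation give `x ^ (2 n - 1) = a ^ 2 x + a b + b x ^ (n - 1)`, whose trace is `(2 n - 1) a b` when
`n > 2`. An Artin-Schreier generator is the case `n = p`, `a = 1`, `b = γ` in characteristic `p`.
-/

section Trinomial

theorem pow_add_of_trinomial {R S : Type*} [CommSemiring R] [Semiring S] [Algebra R S] {x : S}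
    {a b : R} {n : ℕ} (h : x ^ n = a • x + algebraMap R S b) (m : ℕ) :
    x ^ (n + m) = a • x ^ (m + 1) + b • x ^ m := by
  rw [pow_add, h, add_mul, smul_mul_assoc, ← pow_succ', ← Algebra.smul_def]

variable {R S : Type*} [CommRing R] [CommRing S] [Algebra R S] {pb : PowerBasis R S} {a b : R}
  {k : ℕ}

theorem powerBasis_repr_gen_pow (hk : k < pb.dim) (i : Fin pb.dim) :
    pb.basis.repr (pb.gen ^ k) i = if k = i then 1 else 0 := by
  rw [← pb.basis_eq_pow ⟨k, hk⟩, Module.Basis.repr_self_apply]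
  simp only [Fin.ext_iff]

theorem powerBasis_repr_gen_pow_add_of_trinomial
    (h : pb.gen ^ pb.dim = a • pb.gen + algebraMap R S b)
    (hk_pos : 0 < k) (hk : k < pb.dim) (i : Fin pb.dim) :
    pb.basis.repr (pb.gen ^ (k + i)) i = if k + 1 = pb.dim ∧ (i : ℕ) ≠ 0 then a else 0 := by
  rcases lt_or_ge (k + i) pb.dim with hlt | hge
  · rw [powerBasis_repr_gen_pow hlt, if_neg (by lia), if_neg (by lia)]
  · obtain ⟨m, hm⟩ := Nat.exists_eq_add_of_le hge
    have hoff : m ≠ i := by lia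
    have hdiag : m + 1 = i ↔ k + 1 = pb.dim ∧ (i : ℕ) ≠ 0 := by lia
    rw [hm, pow_add_of_trinomial h, map_add, map_smul, map_smul, Finsupp.add_apply,
      Finsupp.smul_apply, Finsupp.smul_apply, powerBasis_repr_gen_pow (by lia),
      powerBasis_repr_gen_pow (by lia), if_neg hoff]
    simp only [hdiag, smul_eq_mul, mul_ite, mul_one, mul_zero, add_zero]

theorem trace_gen_pow_of_trinomial (h : pb.gen ^ pb.dim = a • pb.gen + algebraMap R S b)
    (hk_pos : 0 < k) (hk : k < pb.dim) :
    Algebra.trace R S (pb.gen ^ k) = if k + 1 = pb.dim then k * a else 0 := by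
  have htrace : Algebra.trace R S (pb.gen ^ k) =
      ∑ i : Fin pb.dim, if k + 1 = pb.dim ∧ (i : ℕ) ≠ 0 then a else 0 := by
    rw [Algebra.trace_eq_matrix_trace pb.basis]
    refine Finset.sum_congr rfl fun i _ ↦ ?_
    rw [Matrix.diag_apply, Algebra.leftMulMatrix_eq_repr_mul, pb.basis_eq_pow, ← pow_add,
      powerBasis_repr_gen_pow_add_of_trinomial h hk_pos hk]
  rw [htrace, Fin.sum_univ_eq_sum_range
    (fun i ↦ if k + 1 = pb.dim ∧ i ≠ 0 then a else 0) pb.dim]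
  split_ifs with hlast
  · simp [← hlast, Finset.sum_range_succ']
  · simp [hlast]

theorem trace_artinSchreier_gen_pow_two_p_sub_one_general (hdim : 2 < pb.dim)
    (h : pb.gen ^ pb.dim = a • pb.gen + algebraMap R S b) :
    Algebra.trace R S (pb.gen ^ (2 * pb.dim - 1)) = (2 * pb.dim - 1) * (a * b) := by
  have hreduce : pb.gen ^ (2 * pb.dim - 1) =
      (a * a) • pb.gen ^ 1 + algebraMap R S (a * b) + b • pb.gen ^ (pb.dim - 1) := by
    calc pb.gen ^ (2 * pb.dim - 1)
        = pb.gen ^ (pb.dim + (pb.dim - 1)) := by congr 1; lia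
      _ = a • pb.gen ^ pb.dim + b • pb.gen ^ (pb.dim - 1) := by
        rw [pow_add_of_trinomial h, Nat.sub_add_cancel (by lia)]
      _ = (a * a) • pb.gen ^ 1 + algebraMap R S (a * b) + b • pb.gen ^ (pb.dim - 1) := by
        rw [h, smul_add, smul_smul, pow_one, Algebra.smul_def a (algebraMap R S b), map_mul]
  have hconst : Algebra.trace R S (algebraMap R S (a * b)) = pb.dim * (a * b) := by
    rw [Algebra.trace_algebraMap_of_basis pb.basis, Fintype.card_fin, nsmul_eq_mul]
  rw [hreduce, map_add, map_add, map_smul, map_smul, hconst,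
    trace_gen_pow_of_trinomial h one_pos (by lia), if_neg (by lia),
    trace_gen_pow_of_trinomial h (by lia) (by lia), if_pos (by lia),
    Nat.cast_pred (by lia), smul_zero, smul_eq_mul]
  ring

end Trinomial

theorem exists_powerBasis_gen_eq_of_finrank_prime {K L : Type*} [Field K] [CommRing L] [IsDomain L]
    [Algebra K L] (hprime : (Module.finrank K L).Prime) {x : L}
    (hx : x ∉ Set.range (algebraMap K L)) :
    ∃ pb : PowerBasis K L, pb.gen = x ∧ pb.dim = Module.finrank K L := by
  have : FiniteDimensional K L := .of_finrank_pos hprime.pos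
  have := Subalgebra.isSimpleOrder_of_finrank_prime K L hprime
  have hne_bot : Algebra.adjoin K {x} ≠ ⊥ := fun hbot ↦
    hx <| Algebra.mem_bot.mp <| hbot ▸ Algebra.self_mem_adjoin_singleton K x
  have htop : Algebra.adjoin K {x} = ⊤ := (eq_bot_or_eq_top _).resolve_left hne_bot
  let pb := PowerBasis.ofAdjoinEqTop (Algebra.IsIntegral.isIntegral x) htop
  exact ⟨pb, PowerBasis.ofAdjoinEqTop_gen _ _, pb.finrank.symm⟩

/-- Let `p` be an odd prime, let `U ⊆ U'` be finite fields of characteristic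
`p` with `[U' : U] = p`, and let `x ∈ U'` with `x ∉ U` be such that `x^p − x = γ` for some
`γ ∈ U`. Then `Tr_{U'/U}(x^(2p−1)) = −γ`. -/
theorem trace_artinSchreier_gen_pow_two_p_sub_one
    (p : ℕ) (hp : p.Prime) (hodd : p ≠ 2)
    (U U' : Type*) [Field U] [Field U'] [Algebra U U'] [Finite U'] [CharP U' p]
    (hrank : Module.finrank U U' = p)
    (x : U') (hx : x ∉ Set.range (algebraMap U U'))
    (γ : U) (hγ : x ^ p - x = algebraMap U U' γ) :
    Algebra.trace U U' (x ^ (2 * p - 1)) = -γ := by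
  have : CharP U p := (algebraMap U U').charP (algebraMap U U').injective p
  obtain ⟨pb, rfl, hdim⟩ := exists_powerBasis_gen_eq_of_finrank_prime (hrank ▸ hp) hx
  obtain rfl : pb.dim = p := hdim.trans hrank
  have hrelation : pb.gen ^ pb.dim = (1 : U) • pb.gen + algebraMap U U' γ := by
    rw [one_smul, ← hγ, add_sub_cancel]
  simpa using trace_artinSchreier_gen_pow_two_p_sub_one_general (hp.two_le.lt_of_ne' hodd) hrelation
end
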